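/- arXiv:2007.01024 — 4 statements merged into one kernel-verified Lean document; each statement's English description precedes it below -/
import Mathlib

section
/- Let β < 0, let h be a C¹ real-valued function on a neighborhood of 0 in ℂ, and let γ ∈ C²([0,1); ℂ) be a regular curve with γ(0) = 0. Then lim_{s→0⁺} |γ(s)|^{−2β} e^{−2h(γ(s))} ( k(s) − β ⟨γ(s), ξ(s)⟩/|γ(s)|² − ⟨∇h(γ(s)), ξ(s)⟩ ) = 0. In geometric terms: the geodesic curvature vector of a C² curve passing through a conformal conical singular point of order β < 0 of the metric e^{2h}|z|^{2β}|dz|² vanishes at that point. -/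
/-!
The prefactor `‖γ‖ ^ (-2β) * exp (-2 h(γ))` tends to `0`, because `-2β > 0` and `γ(s) → 0`, so it is
enough that the bracket stays bounded. The curvature converges and the gradient term is controlled by
the continuity of `fderiv ℝ h` at `0` together with `‖ξ‖ ≤ 1`. The only delicate term is
`⟨γ, ξ⟩ / ‖γ‖²`. Since `γ(0) = 0` and `(γ - s γ')' = -s γ''`, the mean value inequality gives
`‖γ(s) - s γ'(s)‖ ≤ M s²` (`norm_sub_smul_derivWithin_le`). As `⟨γ', ξ⟩ = 0`, the numerator equals
`⟨γ - s γ', ξ⟩ = O(s²)`, while the same estimate and regularity give `‖γ(s)‖ ≥ c s`.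
-/


open Set Filter Topology

/-- The Euclidean inner product on `ℂ ≅ ℝ²`. -/
noncomputable def edot (z w : ℂ) : ℝ := z.re * w.re + z.im * w.im

/-- The unit normal of a curve `γ` defined on `[0,1)`: the rotation by `+π/2`
(i.e. multiplication by `I`) of the unit tangent `γ'/|γ'|`, derivatives taken
within `Ico 0 1` (one-sided at `0`). -/
noncomputable def unitNormal (γ : ℝ → ℂ) (s : ℝ) : ℂ :=
  Complex.I * (‖derivWithin γ (Ico (0:ℝ) 1) s‖⁻¹ • derivWithin γ (Ico (0:ℝ) 1) s)

/-- The signed Euclidean curvature `k = det(γ', γ'')/|γ'|³` of a curve `γ` on `[0,1)`,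
derivatives taken within `Ico 0 1`. -/
noncomputable def sCurv (γ : ℝ → ℂ) (s : ℝ) : ℝ :=
  ((derivWithin γ (Ico (0:ℝ) 1) s).re *
      (derivWithin (derivWithin γ (Ico (0:ℝ) 1)) (Ico (0:ℝ) 1) s).im -
    (derivWithin γ (Ico (0:ℝ) 1) s).im *
      (derivWithin (derivWithin γ (Ico (0:ℝ) 1)) (Ico (0:ℝ) 1) s).re) /
    ‖derivWithin γ (Ico (0:ℝ) 1) s‖ ^ 3

lemma abs_edot_le (z w : ℂ) : |edot z w| ≤ ‖z‖ * ‖w‖ := by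
  rw [← Real.sqrt_sq_eq_abs, Complex.norm_def, Complex.norm_def,
    ← Real.sqrt_mul (Complex.normSq_nonneg z)]
  apply Real.sqrt_le_sqrt
  simp only [edot, Complex.normSq_apply]
  nlinarith [sq_nonneg (z.re * w.im - z.im * w.re)]

lemma norm_unitNormal_le (γ : ℝ → ℂ) (s : ℝ) : ‖unitNormal γ s‖ ≤ 1 := by
  simp only [unitNormal, norm_mul, Complex.norm_I, one_mul, norm_smul, norm_inv, norm_norm]
  exact inv_mul_le_one

/-- Moving `γ(s)` along the tangent direction does not change its normal component. -/
lemma edot_unitNormal_eq (γ : ℝ → ℂ) (s t : ℝ) :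
    edot (γ s) (unitNormal γ s) =
      edot (γ s - (t : ℝ) • derivWithin γ (Ico (0:ℝ) 1) s) (unitNormal γ s) := by
  simp [edot, unitNormal]
  ring

/-- Second-order comparison of `γ(s)` with `s γ'(s)`, by the mean value inequality applied to
`γ(s) - s γ'(s)`, whose derivative is `-s γ''(s)`. -/
lemma norm_sub_smul_derivWithin_le (γ : ℝ → ℂ) (hγ : ContDiffOn ℝ 2 γ (Ico (0:ℝ) 1))
    (h0 : γ 0 = 0) : ∃ M : ℝ, 0 ≤ M ∧ ∀ s ∈ Icc (0:ℝ) (1 / 2),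
      ‖γ s - s • derivWithin γ (Ico (0:ℝ) 1) s‖ ≤ M * s ^ 2 := by
  have hu : UniqueDiffOn ℝ (Ico (0:ℝ) 1) := uniqueDiffOn_Ico 0 1
  have hD : ContDiffOn ℝ 1 (derivWithin γ (Ico (0:ℝ) 1)) (Ico (0:ℝ) 1) :=
    hγ.derivWithin hu (by norm_num)
  have hD2 := hD.continuousOn_derivWithin hu le_rfl
  have hsub : Icc (0:ℝ) (1 / 2) ⊆ Ico (0:ℝ) 1 := fun x hx => ⟨hx.1, by linarith [hx.2]⟩
  obtain ⟨M, hM⟩ := isCompact_Icc.exists_bound_of_continuousOn (hD2.mono hsub)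
  have hM0 : 0 ≤ M := (norm_nonneg _).trans (hM 0 ⟨le_rfl, by norm_num⟩)
  refine ⟨M, hM0, fun t ht => ?_⟩
  have hsub' : Icc (0:ℝ) t ⊆ Ico (0:ℝ) 1 := (Icc_subset_Icc_right ht.2).trans hsub
  have key := Convex.norm_image_sub_le_of_norm_hasDerivWithin_le
    (f := fun s : ℝ => γ s - s • derivWithin γ (Ico (0:ℝ) 1) s)
    (f' := fun s : ℝ => -(s • derivWithin (derivWithin γ (Ico (0:ℝ) 1)) (Ico (0:ℝ) 1) s))
    (C := M * t) (s := Icc 0 t) (x := 0) (y := t) ?_ ?_ (convex_Icc 0 t)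
    (left_mem_Icc.2 ht.1) (right_mem_Icc.2 ht.1)
  · simpa [h0, abs_of_nonneg ht.1, mul_assoc, pow_two] using key
  · intro x hx
    have h1 := ((hγ.differentiableOn (by norm_num)) x (hsub' hx)).hasDerivWithinAt
    have h2 := ((hD.differentiableOn (by norm_num)) x (hsub' hx)).hasDerivWithinAt
    have h3 := (h1.sub ((hasDerivWithinAt_id x (Ico (0:ℝ) 1)).smul h2)).mono hsub'
    exact h3.congr_deriv (by simp)
  · intro x hx
    rw [norm_neg, norm_smul, Real.norm_eq_abs, abs_of_nonneg hx.1, mul_comm]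
    exact mul_le_mul (hM x ⟨hx.1, hx.2.trans ht.2⟩) hx.2 hx.1 hM0

/-- Let `β < 0`, `h` a `C¹` real-valued function on a neighborhood of `0 ∈ ℂ`, and
`γ ∈ C²([0,1); ℂ)` a regular curve with `γ(0) = 0`. Then
`|γ(s)|^(−2β) e^(−2h(γ(s))) ( k(s) − β ⟨γ(s),ξ(s)⟩/|γ(s)|² − ⟨∇h(γ(s)), ξ(s)⟩ ) → 0`
as `s → 0⁺`: the geodesic curvature vector of a `C²` curve through a conformal conical
singular point of order `β < 0` of the metric `e^{2h}|z|^{2β}|dz|²` vanishes there.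
(Here `⟨∇h(z), v⟩` is expressed as `fderiv ℝ h z v`.) -/
theorem stmt1 (β : ℝ) (hβ : β < 0) (h : ℂ → ℝ) (U : Set ℂ) (hU : U ∈ 𝓝 (0:ℂ))
    (hh : ContDiffOn ℝ 1 h U)
    (γ : ℝ → ℂ) (hγ : ContDiffOn ℝ 2 γ (Ico (0:ℝ) 1))
    (hreg : ∀ s ∈ Ico (0:ℝ) 1, derivWithin γ (Ico (0:ℝ) 1) s ≠ 0)
    (h0 : γ 0 = 0) :
    Tendsto
      (fun s => ‖γ s‖ ^ (-2 * β) * Real.exp (-2 * h (γ s)) *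
        (sCurv γ s - β * edot (γ s) (unitNormal γ s) / ‖γ s‖ ^ 2 -
          fderiv ℝ h (γ s) (unitNormal γ s)))
      (𝓝[>] (0:ℝ)) (𝓝 0) := by
  have hu : UniqueDiffOn ℝ (Ico (0:ℝ) 1) := uniqueDiffOn_Ico 0 1
  have hD : ContDiffOn ℝ 1 (derivWithin γ (Ico (0:ℝ) 1)) (Ico (0:ℝ) 1) :=
    hγ.derivWithin hu (by norm_num)
  have hmem : (0:ℝ) ∈ Ico (0:ℝ) 1 := ⟨le_rfl, one_pos⟩
  have hle : 𝓝[>] (0:ℝ) ≤ 𝓝[Ico (0:ℝ) 1] 0 := by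
    rw [← nhdsWithin_Ioo_eq_nhdsGT (zero_lt_one (α := ℝ))]
    exact nhdsWithin_mono _ Ioo_subset_Ico_self
  have tγ : Tendsto γ (𝓝[>] (0:ℝ)) (𝓝 0) := by
    have := (hγ.continuousOn 0 hmem).tendsto.mono_left hle
    rwa [h0] at this
  have tD := (hD.continuousOn 0 hmem).tendsto.mono_left hle
  have tD2 := (hD.continuousOn_derivWithin hu le_rfl 0 hmem).tendsto.mono_left hle
  have hD0 := hreg 0 hmem
  have hhat : ContDiffAt ℝ 1 h 0 := hh.contDiffAt hU
  have tpre : Tendsto (fun s => ‖γ s‖ ^ (-2 * β) * Real.exp (-2 * h (γ s)))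
      (𝓝[>] (0:ℝ)) (𝓝 0) := by
    have h1 : Tendsto (fun s => ‖γ s‖ ^ (-2 * β)) (𝓝[>] (0:ℝ)) (𝓝 0) := by
      have := tγ.norm.rpow_const (p := -2 * β) (Or.inr (by linarith))
      rwa [norm_zero, Real.zero_rpow (by linarith)] at this
    have h2 := (Real.continuous_exp.tendsto _).comp
      ((hhat.continuousAt.tendsto.comp tγ).const_mul (-2))
    simpa using h1.mul h2
  have bcurv : (sCurv γ) =O[𝓝[>] (0:ℝ)] (fun _ => (1:ℝ)) := by
    have re {f : ℝ → ℂ} {a : ℂ} (hf : Tendsto f (𝓝[>] (0:ℝ)) (𝓝 a)) :=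
      (Complex.continuous_re.tendsto a).comp hf
    have im {f : ℝ → ℂ} {a : ℂ} (hf : Tendsto f (𝓝[>] (0:ℝ)) (𝓝 a)) :=
      (Complex.continuous_im.tendsto a).comp hf
    exact ((((re tD).mul (im tD2)).sub ((im tD).mul (re tD2))).div (tD.norm.pow 3)
      (pow_ne_zero 3 (norm_ne_zero_iff.2 hD0))).isBigO_one ℝ
  have bgrad : (fun s => fderiv ℝ h (γ s) (unitNormal γ s)) =O[𝓝[>] (0:ℝ)]
      (fun _ => (1:ℝ)) := by
    have hf := ((hhat.continuousAt_fderiv (by norm_num)).tendsto.comp tγ).isBigO_one ℝ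
    refine Asymptotics.IsBigO.trans (Asymptotics.IsBigO.of_bound 1 (.of_forall fun s => ?_)) hf
    rw [one_mul]
    exact (ContinuousLinearMap.le_opNorm _ _).trans
      (mul_le_of_le_one_right (norm_nonneg _) (norm_unitNormal_le γ s))
  have bmid : (fun s => β * edot (γ s) (unitNormal γ s) / ‖γ s‖ ^ 2) =O[𝓝[>] (0:ℝ)]
      (fun _ => (1:ℝ)) := by
    obtain ⟨M, hM0, hM⟩ := norm_sub_smul_derivWithin_le γ hγ h0
    obtain ⟨c, hc, hc'⟩ := exists_between (norm_pos_iff.2 hD0)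
    -- Once `M s < c / 2`, the error `M s²` absorbs at most half of `c s ≤ s ‖γ'(s)‖`.
    have hsmall : ∀ᶠ s in 𝓝[>] (0:ℝ), M * s < c / 2 := by
      have : Tendsto (fun s : ℝ => M * s) (𝓝[>] (0:ℝ)) (𝓝 (M * 0)) :=
        (tendsto_id.mono_left nhdsWithin_le_nhds).const_mul M
      exact this.eventually_lt_const (by simpa using hc)
    refine Asymptotics.IsBigO.of_bound (|β| * (M / (c / 2) ^ 2)) ?_
    filter_upwards [hsmall, tD.norm.eventually_const_lt hc',
      Ioc_mem_nhdsGT (show (0:ℝ) < 1 / 2 by norm_num)] with s hs1 hs2 hs3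
    have hs0 : 0 < s := hs3.1
    have hg := hM s ⟨hs0.le, hs3.2⟩
    have hlow : c / 2 * s ≤ ‖γ s‖ := by
      have h1 := norm_sub_norm_le (s • derivWithin γ (Ico (0:ℝ) 1) s) (γ s)
      rw [norm_sub_rev, norm_smul, Real.norm_eq_abs, abs_of_pos hs0] at h1
      nlinarith
    have hnum : |edot (γ s) (unitNormal γ s)| ≤ M * s ^ 2 := by
      rw [edot_unitNormal_eq γ s s]
      exact ((abs_edot_le _ _).trans
        (mul_le_of_le_one_right (norm_nonneg _) (norm_unitNormal_le γ s))).trans hg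
    rw [norm_one, mul_one, mul_div_assoc, norm_mul, Real.norm_eq_abs, Real.norm_eq_abs, abs_div,
      abs_of_nonneg (sq_nonneg ‖γ s‖)]
    refine mul_le_mul_of_nonneg_left ?_ (abs_nonneg β)
    calc _ ≤ M * s ^ 2 / (c / 2 * s) ^ 2 := by gcongr
      _ = M / (c / 2) ^ 2 := by field_simp
  have hO := (Asymptotics.isBigO_refl (fun s => ‖γ s‖ ^ (-2 * β) * Real.exp (-2 * h (γ s)))
    (𝓝[>] (0:ℝ))).mul ((bcurv.sub bmid).sub bgrad)
  refine hO.trans_tendsto ?_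
  simpa using tpre
end

section
/- Let β ∈ ℝ with β ≠ −1 and let r : I → (0,∞) be a C² function on an open interval I. Then r satisfies r r″ − (β+2)(r′)² − (β+1) r² = 0 on I if and only if there exist constants m₁ > 0 and m₂ ∈ ℝ such that r(φ)^{β+1} cos((β+1)φ − m₂) = m₁^{β+1} for all φ ∈ I (in particular cos((β+1)φ − m₂) > 0 on I). These curves are exactly the geodesics, written in polar coordinates, of the singular flat metric |z|^{2β}|dz|² that are not radial lines. -/
open Set

/-!
Put `k = β + 1 ≠ 0`. The substitution `u = r ^ (-k)` linearises the equation, because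
`u'' + k² u = -k r ^ (-k-2) (r r'' - (k+1) r'² - k r²)` (lemmas `hasDerivAt_u`, `hasDerivAt_u'`).
Hence the geodesic equation is equivalent to the harmonic oscillator `u'' = -k² u`. Its positive
solutions are `u = C cos (k φ - m₂)` with `C > 0`: the two quantities
`u cos kφ - (u'/k) sin kφ` and `u sin kφ + (u'/k) cos kφ` are conserved (lemma `oscillator`), and
`(C, m₂)` are the polar coordinates of this constant vector. With `C = m₁ ^ (-k)` this is the
claimed closed form.
-/

lemma hasDerivAt_u {r : ℝ → ℝ} {k φ r' : ℝ} (h : HasDerivAt r r' φ) (hpos : 0 < r φ) :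
    HasDerivAt (fun x => r x ^ (-k)) (-k * r φ ^ (-k - 1) * r') φ := by
  convert h.rpow_const (p := -k) (Or.inl hpos.ne') using 1
  ring

lemma hasDerivAt_u' {r s : ℝ → ℝ} {k φ s' : ℝ} (h : HasDerivAt r (s φ) φ)
    (h2 : HasDerivAt s s' φ) (hpos : 0 < r φ) :
    HasDerivAt (fun x => -k * r x ^ (-k - 1) * s x)
      (-k * r φ ^ (-k - 2) * (r φ * s' - (k + 1) * s φ ^ 2 - k * r φ ^ 2)
        - k ^ 2 * r φ ^ (-k)) φ := by
  have e1 : r φ ^ (-k - 1) = r φ ^ (-k - 2) * r φ := by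
    rw [← Real.rpow_add_one hpos.ne']; ring_nf
  have e0 : r φ ^ (-k) = r φ ^ (-k - 2) * r φ ^ 2 := by
    rw [← Real.rpow_natCast, ← Real.rpow_add hpos]; norm_num
  have e2 : r φ ^ (-k - 1 - 1) = r φ ^ (-k - 2) := by ring_nf
  refine (((h.rpow_const (p := -k - 1) (Or.inl hpos.ne')).const_mul (-k)).mul h2).congr_deriv ?_
  rw [e1, e0, e2]
  ring

/-- A solution of `u'' = -k² u` on an interval is a phase-shifted cosine. -/
lemma oscillator {k a b : ℝ} (hk : k ≠ 0) (u v : ℝ → ℝ)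
    (hu : ∀ φ ∈ Ioo a b, HasDerivAt u (v φ) φ)
    (hv : ∀ φ ∈ Ioo a b, HasDerivAt v (-k ^ 2 * u φ) φ) :
    ∃ C ≥ (0 : ℝ), ∃ m : ℝ, ∀ φ ∈ Ioo a b, u φ = C * Real.cos (k * φ - m) := by
  have hc : ∀ φ : ℝ, HasDerivAt (fun x => Real.cos (k * x)) (-Real.sin (k * φ) * k) φ := fun φ => by
    simpa using ((hasDerivAt_id φ).const_mul k).cos
  have hs : ∀ φ : ℝ, HasDerivAt (fun x => Real.sin (k * x)) (Real.cos (k * φ) * k) φ := fun φ => by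
    simpa using ((hasDerivAt_id φ).const_mul k).sin
  -- A function with zero derivative on the interval is constant there.
  have key : ∀ f : ℝ → ℝ, (∀ φ ∈ Ioo a b, HasDerivAt f 0 φ) → ∃ c, ∀ φ ∈ Ioo a b, f φ = c :=
    fun f hf => isOpen_Ioo.exists_is_const_of_deriv_eq_zero isPreconnected_Ioo
      (fun φ h => (hf φ h).differentiableAt.differentiableWithinAt) (fun φ h => (hf φ h).deriv)
  obtain ⟨A, hA⟩ := key (fun x => u x * Real.cos (k * x) - v x / k * Real.sin (k * x))
    (fun φ h => by
      refine (((hu φ h).mul (hc φ)).sub (((hv φ h).div_const k).mul (hs φ))).congr_deriv ?_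
      field_simp
      ring)
  obtain ⟨B, hB⟩ := key (fun x => u x * Real.sin (k * x) + v x / k * Real.cos (k * x))
    (fun φ h => by
      refine (((hu φ h).mul (hs φ)).add (((hv φ h).div_const k).mul (hc φ))).congr_deriv ?_
      field_simp
      ring)
  refine ⟨‖(⟨A, B⟩ : ℂ)‖, norm_nonneg _, Complex.arg ⟨A, B⟩, fun φ h => ?_⟩
  have h1 := Complex.norm_mul_cos_arg ⟨A, B⟩
  have h2 := Complex.norm_mul_sin_arg ⟨A, B⟩
  have hA' := hA φ h
  have hB' := hB φ h
  rw [Real.cos_sub]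
  linear_combination (-Real.cos (k * φ)) * h1 - Real.sin (k * φ) * h2
    + Real.cos (k * φ) * hA' + Real.sin (k * φ) * hB' - u φ * Real.sin_sq_add_cos_sq (k * φ)

/-- Let `β ≠ −1` and let `r : (a,b) → (0,∞)` be `C²`.  Then `r` satisfies the geodesic
ODE `r r'' − (β+2)(r')² − (β+1)r² = 0` of the singular flat metric `|z|^{2β}|dz|²`
(in polar coordinates) if and only if there are constants `m₁ > 0` and `m₂ ∈ ℝ` with
`r(φ)^{β+1} cos((β+1)φ − m₂) = m₁^{β+1}` on `(a,b)`; in particular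
`cos((β+1)φ − m₂) > 0` there.  (Real powers are `Real.rpow`.) -/
theorem stmt6 (β : ℝ) (hβ : β ≠ -1) (a b : ℝ) (r : ℝ → ℝ)
    (hr : ContDiffOn ℝ 2 r (Ioo a b)) (hrpos : ∀ φ ∈ Ioo a b, 0 < r φ) :
    (∀ φ ∈ Ioo a b,
        r φ * deriv (deriv r) φ - (β + 2) * (deriv r φ) ^ 2 - (β + 1) * (r φ) ^ 2 = 0) ↔
    (∃ m₁ > (0:ℝ), ∃ m₂ : ℝ, ∀ φ ∈ Ioo a b,
        0 < Real.cos ((β + 1) * φ - m₂) ∧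
        r φ ^ (β + 1) * Real.cos ((β + 1) * φ - m₂) = m₁ ^ (β + 1)) := by
  have hk : β + 1 ≠ 0 := fun h => hβ (by linarith)
  have hr1 : ∀ φ ∈ Ioo a b, HasDerivAt r (deriv r φ) φ := fun φ h =>
    ((hr.differentiableOn (by norm_num)).differentiableAt (isOpen_Ioo.mem_nhds h)).hasDerivAt
  have hr2 : ∀ φ ∈ Ioo a b, HasDerivAt (deriv r) (deriv (deriv r) φ) φ := fun φ h =>
    (((hr.deriv_of_isOpen (m := 1) isOpen_Ioo (by norm_num)).differentiableOn
      (by norm_num)).differentiableAt (isOpen_Ioo.mem_nhds h)).hasDerivAt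
  have hu := fun φ h => hasDerivAt_u (k := β + 1) (hr1 φ h) (hrpos φ h)
  have hv := fun φ h => hasDerivAt_u' (k := β + 1) (hr1 φ h) (hr2 φ h) (hrpos φ h)
  have hinv : ∀ φ ∈ Ioo a b, r φ ^ (β + 1) * r φ ^ (-(β + 1)) = 1 := fun φ h => by
    rw [← Real.rpow_add (hrpos φ h)]; simp
  constructor
  · intro hode
    rcases (Ioo a b).eq_empty_or_nonempty with he | ⟨x, hx⟩
    · exact ⟨1, one_pos, 0, by simp [he]⟩
    obtain ⟨C, hC, m, hm⟩ := oscillator hk _ _ hu (fun φ h => by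
      convert hv φ h using 1
      linear_combination ((β + 1) * r φ ^ (-(β + 1) - 2)) * hode φ h)
    have hpos : ∀ φ ∈ Ioo a b, 0 < C * Real.cos ((β + 1) * φ - m) := fun φ h => by
      rw [← hm φ h]; exact Real.rpow_pos_of_pos (hrpos φ h) _
    have hC0 : 0 < C := hC.lt_of_ne (fun h => by simpa [← h] using hpos x hx)
    refine ⟨C⁻¹ ^ (β + 1)⁻¹, by positivity, m, fun φ h =>
      ⟨pos_of_mul_pos_right (hpos φ h) hC, ?_⟩⟩
    rw [Real.rpow_inv_rpow (by positivity) hk]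
    have h1 := hinv φ h
    rw [hm φ h] at h1
    refine eq_inv_of_mul_eq_one_left ?_
    linarith
  · rintro ⟨m₁, hm₁, m, hm⟩ φ hφ
    set D := m₁ ^ (β + 1) with hD
    have hD0 : 0 < D := Real.rpow_pos_of_pos hm₁ _
    have hw : ∀ x : ℝ, HasDerivAt (fun y => (β + 1) * y - m) (β + 1) x := fun x => by
      simpa using ((hasDerivAt_id x).const_mul (β + 1)).sub_const m
    have eu : ∀ x ∈ Ioo a b, r x ^ (-(β + 1)) = Real.cos ((β + 1) * x - m) / D := fun x h => by
      rw [eq_div_iff hD0.ne', ← (hm x h).2]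
      linear_combination Real.cos ((β + 1) * x - m) * hinv x h
    -- Differentiating the closed form `u = cos (k φ - m) / D` once, then twice, and comparing.
    have ev : ∀ x ∈ Ioo a b, -(β + 1) * r x ^ (-(β + 1) - 1) * deriv r x
        = -Real.sin ((β + 1) * x - m) * (β + 1) / D := fun x h =>
      (hu x h).unique (((hw x).cos.div_const D).congr_of_eventuallyEq
        (Filter.eventuallyEq_of_mem (isOpen_Ioo.mem_nhds h) eu))
    have e2 := (hv φ hφ).unique ((((hw φ).sin.neg.mul_const (β + 1)).div_const D).congr_of_eventuallyEq
        (Filter.eventuallyEq_of_mem (isOpen_Ioo.mem_nhds hφ) ev))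
    rw [eu φ hφ] at e2
    have hp := Real.rpow_pos_of_pos (hrpos φ hφ) (-(β + 1) - 2)
    refine (mul_eq_zero.mp ?_).resolve_left (mul_ne_zero (neg_ne_zero.mpr hk) hp.ne')
    linear_combination e2
end

section
/- Let T > 0, Ω = (0,1) × (0,T), and let u be continuous on [0,1] × [0,T) and C² on Ω, satisfying u_t = P u_{xx} + Q u_x + Ψ(u) on Ω, where P is continuous and positive on [0,1] × [0,T), Q is continuous on (0,1) × [0,T), and Ψ : ℝ → ℝ is locally Lipschitz. Assume that for every t ∈ (0,T) there exist δ > 0 and a compact set K ⊂ (0,1) such that for every t′ ∈ (t − δ, t + δ) ∩ [0,T) the maximum u_max(t′) = max_{x ∈ [0,1]} u(x, t′) is attained at some point of K. Then the function u_max is locally Lipschitz on (0,T), and at every time t ∈ (0,T) at which it is differentiable one has u_max′(t) ≤ Ψ(u_max(t)). -/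
/-!
Near a time `t` the maximum is attained on a compact set `K ⊂ (0,1)`, so `umax u` is there a maximum
of functions `u x ·` with `x ∈ K`. Since `∂ₜu` is bounded on `K × [t - ε, t + ε]`, these are
equi-Lipschitz (`exists_time_lipschitz_bound`), hence so is their maximum.

For the differential inequality, let `x` be an interior maximum point at time `t`. The function
`τ ↦ umax u τ - u x τ` is nonnegative near `t` and vanishes at `t`, so where `umax u` is
differentiable its derivative equals `uₜ(x,t)`. At `x` one has `uₓ = 0` and `uₓₓ ≤ 0`
(`IsLocalMax.deriv_deriv_nonpos`), and the equation with `P > 0` gives `uₜ(x,t) ≤ Ψ(u(x,t))`.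
-/

open Set

/-- `umax u t = max_{x ∈ [0,1]} u(x,t)` (as a supremum). -/
noncomputable def umax (u : ℝ → ℝ → ℝ) (t : ℝ) : ℝ :=
  sSup ((fun x => u x t) '' Icc 0 1)

/-- Continuity at the point suffices: if the second derivative were positive, the point would also
be a local minimum, so `f` would be locally constant and its second derivative zero. -/
theorem IsLocalMax.deriv_deriv_nonpos {f : ℝ → ℝ} {x : ℝ} (h : IsLocalMax f x)
    (hc : ContinuousAt f x) : deriv (deriv f) x ≤ 0 := by
  by_contra! hpos
  have hmin : IsLocalMin f x := isLocalMin_of_deriv_deriv_pos hpos h.deriv_eq_zero hc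
  have heq : f =ᶠ[nhds x] fun _ => f x := by
    filter_upwards [h, hmin] with y h1 h2 using le_antisymm h1 h2
  have h0 : deriv (deriv f) x = 0 := by
    rw [heq.deriv.deriv_eq]
    simp
  exact hpos.ne' h0

theorem umax_eq_of_isMax {u : ℝ → ℝ → ℝ} {x t : ℝ} (hx : x ∈ Icc (0:ℝ) 1)
    (h : ∀ y ∈ Icc (0:ℝ) 1, u y t ≤ u x t) : umax u t = u x t := by
  refine IsGreatest.csSup_eq ⟨⟨x, hx, rfl⟩, ?_⟩
  rintro _ ⟨y, hy, rfl⟩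
  exact h y hy

/-- Expresses `uₜ` through the full derivative of `u`, which is continuous on the open rectangle. -/
theorem hasDerivAt_time {T : ℝ} {u : ℝ → ℝ → ℝ}
    (hu : ContDiffOn ℝ 2 (fun q : ℝ × ℝ => u q.1 q.2) (Ioo 0 1 ×ˢ Ioo 0 T))
    {x t : ℝ} (hx : x ∈ Ioo (0:ℝ) 1) (ht : t ∈ Ioo 0 T) :
    HasDerivAt (fun τ => u x τ)
      (fderiv ℝ (fun q : ℝ × ℝ => u q.1 q.2) (x, t) (0, 1)) t := by
  have hd : DifferentiableAt ℝ (fun q : ℝ × ℝ => u q.1 q.2) (x, t) :=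
    (hu.differentiableOn (by norm_num)).differentiableAt
      ((isOpen_Ioo.prod isOpen_Ioo).mem_nhds ⟨hx, ht⟩)
  exact hd.hasFDerivAt.comp_hasDerivAt t ((hasDerivAt_const t x).prodMk (hasDerivAt_id t))

/-- Uniformity in `x ∈ K` comes from the boundedness of the full derivative of `u` on the compact
set `K × [a, b]`. -/
theorem exists_time_lipschitz_bound {T : ℝ} {u : ℝ → ℝ → ℝ}
    (hu : ContDiffOn ℝ 2 (fun q : ℝ × ℝ => u q.1 q.2) (Ioo 0 1 ×ˢ Ioo 0 T))
    {K : Set ℝ} (hK : IsCompact K) (hK01 : K ⊆ Ioo 0 1) {a b : ℝ} (hab : Icc a b ⊆ Ioo 0 T) :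
    ∃ C : NNReal, ∀ x ∈ K, LipschitzOnWith C (fun τ => u x τ) (Icc a b) := by
  have hcont : ContinuousOn (fderiv ℝ (fun q : ℝ × ℝ => u q.1 q.2)) (K ×ˢ Icc a b) :=
    (hu.continuousOn_fderiv_of_isOpen (isOpen_Ioo.prod isOpen_Ioo) (by norm_num)).mono
      (prod_mono hK01 hab)
  obtain ⟨C, hC⟩ := (hK.prod isCompact_Icc).exists_bound_of_continuousOn hcont
  refine ⟨C.toNNReal, fun x hx => ?_⟩
  refine (convex_Icc a b).lipschitzOnWith_of_nnnorm_hasDerivWithin_le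
    (fun τ hτ => (hasDerivAt_time hu (hK01 hx) (hab hτ)).hasDerivWithinAt) (fun τ hτ => ?_)
  have h1 := (fderiv ℝ (fun q : ℝ × ℝ => u q.1 q.2) (x, τ)).le_opNorm ((0, 1) : ℝ × ℝ)
  have h2 : ‖((0, 1) : ℝ × ℝ)‖ = 1 := by simp [Prod.norm_def]
  rw [h2, mul_one] at h1
  exact NNReal.le_toNNReal_of_coe_le (h1.trans (hC (x, τ) ⟨hx, hτ⟩))

/-- Hamilton-type maximum principle (first part).  Let `u` be continuous on
`[0,1] × [0,T)` and `C²` on `Ω = (0,1) × (0,T)`, solving `u_t = P u_xx + Q u_x + Ψ(u)`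
on `Ω`, with `P` continuous and positive on `[0,1] × [0,T)`, `Q` continuous on
`(0,1) × [0,T)` and `Ψ` locally Lipschitz.  Assume that for every `t ∈ (0,T)` there
are `δ > 0` and a compact `K ⊂ (0,1)` such that for every
`t' ∈ (t−δ, t+δ) ∩ [0,T)` the maximum `u_max(t')` is attained at a point of `K`.
Then `u_max` is locally Lipschitz on `(0,T)` and at every differentiability time
`t ∈ (0,T)` one has `u_max'(t) ≤ Ψ(u_max(t))`. -/
theorem stmt13 (T : ℝ) (hT : 0 < T) (u P Q : ℝ → ℝ → ℝ) (Ψ : ℝ → ℝ)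
    (hu_cont : ContinuousOn (fun q : ℝ × ℝ => u q.1 q.2) (Icc 0 1 ×ˢ Ico 0 T))
    (hu_smooth : ContDiffOn ℝ 2 (fun q : ℝ × ℝ => u q.1 q.2) (Ioo 0 1 ×ˢ Ioo 0 T))
    (hP_cont : ContinuousOn (fun q : ℝ × ℝ => P q.1 q.2) (Icc 0 1 ×ˢ Ico 0 T))
    (hP_pos : ∀ x ∈ Icc (0:ℝ) 1, ∀ t ∈ Ico (0:ℝ) T, 0 < P x t)
    (hQ_cont : ContinuousOn (fun q : ℝ × ℝ => Q q.1 q.2) (Ioo 0 1 ×ˢ Ico 0 T))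
    (hΨ : LocallyLipschitz Ψ)
    (hpde : ∀ x ∈ Ioo (0:ℝ) 1, ∀ t ∈ Ioo (0:ℝ) T,
      deriv (fun τ => u x τ) t
        = P x t * deriv (deriv (fun y => u y t)) x
          + Q x t * deriv (fun y => u y t) x + Ψ (u x t))
    (hK : ∀ t ∈ Ioo (0:ℝ) T, ∃ δ > (0:ℝ), ∃ K : Set ℝ, IsCompact K ∧ K ⊆ Ioo 0 1 ∧
      ∀ t' ∈ Ioo (t - δ) (t + δ) ∩ Ico 0 T,
        ∃ x ∈ K, ∀ y ∈ Icc (0:ℝ) 1, u y t' ≤ u x t') :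
    LocallyLipschitzOn (Ioo 0 T) (umax u) ∧
    ∀ t ∈ Ioo (0:ℝ) T, DifferentiableAt ℝ (umax u) t →
      deriv (umax u) t ≤ Ψ (umax u t) := by
  refine ⟨fun t ht => ?_, fun t ht hdiff => ?_⟩
  · obtain ⟨δ, hδ, K, hKc, hK01, hKmax⟩ := hK t ht
    obtain ⟨a, b, htab, hnhds, hsub⟩ := exists_Icc_mem_subset_of_mem_nhds
      (Filter.inter_mem (Ioo_mem_nhds ht.1 ht.2)
        (Ioo_mem_nhds (sub_lt_self t hδ) (lt_add_of_pos_right t hδ)))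
    obtain ⟨C, hC⟩ := exists_time_lipschitz_bound hu_smooth hKc hK01
      (fun τ hτ => (hsub hτ).1)
    refine ⟨C, Icc a b, mem_nhdsWithin_of_mem_nhds hnhds, ?_⟩
    refine LipschitzOnWith.of_le_add_mul C fun s hs r hr => ?_
    obtain ⟨x, hxK, hx⟩ := hKmax s ⟨(hsub hs).2, Ioo_subset_Ico_self (hsub hs).1⟩
    obtain ⟨y, hyK, hy⟩ := hKmax r ⟨(hsub hr).2, Ioo_subset_Ico_self (hsub hr).1⟩
    have hx01 := Ioo_subset_Icc_self (hK01 hxK)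
    rw [umax_eq_of_isMax hx01 hx, umax_eq_of_isMax (Ioo_subset_Icc_self (hK01 hyK)) hy]
    have h1 : u x s ≤ u x r + C * dist s r :=
      LipschitzOnWith.le_add_mul (hC x hxK) hs hr
    linarith [hy x hx01]
  · obtain ⟨δ, hδ, K, -, hK01, hKmax⟩ := hK t ht
    obtain ⟨x, hxK, hx⟩ := hKmax t
      ⟨⟨sub_lt_self t hδ, lt_add_of_pos_right t hδ⟩, Ioo_subset_Ico_self ht⟩
    have hxo := hK01 hxK
    have hx01 := Ioo_subset_Icc_self hxo
    have hut := hasDerivAt_time hu_smooth hxo ht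
    -- `umax u` touches `u x ·` from above at `t`, which forces their time derivatives to agree.
    have hmin : IsLocalMin (fun τ => umax u τ - u x τ) t := by
      filter_upwards [Ioo_mem_nhds ht.1 ht.2,
        Ioo_mem_nhds (sub_lt_self t hδ) (lt_add_of_pos_right t hδ)] with s hs1 hs2
      obtain ⟨y, hyK, hy⟩ := hKmax s ⟨hs2, Ioo_subset_Ico_self hs1⟩
      rw [umax_eq_of_isMax hx01 hx, umax_eq_of_isMax (Ioo_subset_Icc_self (hK01 hyK)) hy]
      linarith [hy x hx01]
    have hderiv : deriv (umax u) t = deriv (fun τ => u x τ) t := by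
      have h := hmin.hasDerivAt_eq_zero (hdiff.hasDerivAt.sub hut.differentiableAt.hasDerivAt)
      linarith
    have hmax : IsLocalMax (fun y => u y t) x := by
      filter_upwards [Ioo_mem_nhds hxo.1 hxo.2] with y hy using hx y (Ioo_subset_Icc_self hy)
    have hcont : ContinuousAt (fun y => u y t) x := by
      have h : ContinuousAt (fun q : ℝ × ℝ => u q.1 q.2) (x, t) :=
        hu_smooth.continuousOn.continuousAt ((isOpen_Ioo.prod isOpen_Ioo).mem_nhds ⟨hxo, ht⟩)
      exact ContinuousAt.comp (f := fun y : ℝ => (y, t)) h (by fun_prop)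
    rw [hderiv, hpde x hxo t ht, hmax.deriv_eq_zero, umax_eq_of_isMax hx01 hx]
    have := mul_nonpos_of_nonneg_of_nonpos (hP_pos x hx01 t (Ioo_subset_Ico_self ht)).le
      (hmax.deriv_deriv_nonpos hcont)
    linarith
end

section
/- Let T > 0 and let u be continuous on [0,1] × [0,T) and C² on (0,1) × (0,T), satisfying u_t = P u_{ss} + Q u_s + u³ on (0,1) × (0,T), where P is continuous and positive on [0,1] × [0,T) and Q is continuous on (0,1) × [0,T). Suppose u(0,t) = u(1,t) = 0 for all t ∈ [0,T) and u(s,0) ≥ 0 for all s ∈ [0,1]. Then u(s,t) ≥ 0 for all (s,t) ∈ [0,1] × [0,T). (This is the analytic statement behind the preservation of convexity under the degenerate curve shortening flow on (ℂ, |z|^{2β}|dz|²): the geodesic curvature of the evolving curves satisfies such an equation, vanishes at the conical endpoints, and is non-negative initially, hence remains non-negative.) -/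
/-!
This is the weak maximum principle. If `u` were negative at `(s₀, t₀)`, let `M` bound `u²` on the
compact rectangle `[0,1] × [0,t₀]` and let `(s₁, t₁)` minimise `w = e^{-(M+1)t} u` there.
The minimum is negative, so the boundary and initial data force `0 < s₁ < 1` and `0 < t₁`.
At that point `u_s = 0`, `u_ss ≥ 0` (`deriv_deriv_nonneg_of_isLocalMin`), and `w_t ≤ 0`
(`deriv_nonpos_of_left_min`), i.e. `u_t ≤ (M+1) u`. The equation gives `u_t ≥ u³`, hence
`u³ ≤ (M+1) u`, and dividing by `u < 0` yields `u² ≥ M + 1`, a contradiction. The term `Q u_s`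
vanishes at the minimum, so the sign and size of `Q` play no role.
-/

open Set

/-- Necessary second-order condition at a local minimum, in terms of `deriv`. If the second
derivative were negative, the point would also be a local maximum, so `f` would be locally
constant. Differentiability near `x` need not be assumed: a negative value of `deriv (deriv f) x`
already provides it. -/
theorem deriv_deriv_nonneg_of_isLocalMin {f : ℝ → ℝ} {x : ℝ} (h : IsLocalMin f x)
    (hc : ContinuousAt f x) : 0 ≤ deriv (deriv f) x := by
  by_contra! hneg
  have hmax := isLocalMax_of_deriv_deriv_neg hneg h.deriv_eq_zero hc
  have hconst : f =ᶠ[nhds x] fun _ => f x := by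
    filter_upwards [h, hmax] with y h1 h2 using le_antisymm h2 h1
  have := hconst.deriv.deriv_eq
  simp at this
  linarith

/-- A function that is minimal on an interval at its right end point has nonpositive
derivative there. -/
theorem deriv_nonpos_of_left_min {f : ℝ → ℝ} {f' a b : ℝ} (hab : a < b)
    (hd : HasDerivAt f f' b) (hmin : ∀ x ∈ Ioo a b, f b ≤ f x) : f' ≤ 0 := by
  have h1 := (hasDerivAt_iff_tendsto_slope.1 hd).mono_left
    (nhdsWithin_mono b (fun x (hx : x ∈ Iio b) => ne_of_lt hx))
  refine le_of_tendsto h1 ?_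
  filter_upwards [Ioo_mem_nhdsLT hab] with x hx
  rw [slope_def_field]
  exact div_nonpos_of_nonneg_of_nonpos (by linarith [hmin x hx]) (by linarith [hx.2])

/-- Positivity is preserved for the degenerate parabolic equation
`u_t = P u_ss + Q u_s + u³` on `(0,1) × (0,T)`: if `u` is continuous on
`[0,1] × [0,T)` and `C²` on `(0,1) × (0,T)`, `P` is continuous and positive on
`[0,1] × [0,T)`, `Q` is continuous on `(0,1) × [0,T)`, `u(0,t) = u(1,t) = 0` for all
`t ∈ [0,T)` and `u(s,0) ≥ 0` on `[0,1]`, then `u ≥ 0` on `[0,1] × [0,T)`.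
(This is the analytic statement behind the preservation of convexity under the
degenerate curve shortening flow on `(ℂ, |z|^{2β}|dz|²)`.) -/
theorem stmt18 (T : ℝ) (hT : 0 < T) (u P Q : ℝ → ℝ → ℝ)
    (hu_cont : ContinuousOn (fun q : ℝ × ℝ => u q.1 q.2) (Icc 0 1 ×ˢ Ico 0 T))
    (hu_smooth : ContDiffOn ℝ 2 (fun q : ℝ × ℝ => u q.1 q.2) (Ioo 0 1 ×ˢ Ioo 0 T))
    (hP_cont : ContinuousOn (fun q : ℝ × ℝ => P q.1 q.2) (Icc 0 1 ×ˢ Ico 0 T))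
    (hP_pos : ∀ s ∈ Icc (0:ℝ) 1, ∀ t ∈ Ico (0:ℝ) T, 0 < P s t)
    (hQ_cont : ContinuousOn (fun q : ℝ × ℝ => Q q.1 q.2) (Ioo 0 1 ×ˢ Ico 0 T))
    (hpde : ∀ s ∈ Ioo (0:ℝ) 1, ∀ t ∈ Ioo (0:ℝ) T,
      deriv (fun τ => u s τ) t
        = P s t * deriv (deriv (fun y => u y t)) s
          + Q s t * deriv (fun y => u y t) s + (u s t) ^ 3)
    (hbd0 : ∀ t ∈ Ico (0:ℝ) T, u 0 t = 0)
    (hbd1 : ∀ t ∈ Ico (0:ℝ) T, u 1 t = 0)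
    (hinit : ∀ s ∈ Icc (0:ℝ) 1, 0 ≤ u s 0) :
    ∀ s ∈ Icc (0:ℝ) 1, ∀ t ∈ Ico (0:ℝ) T, 0 ≤ u s t := by
  intro s₀ hs₀ t₀ ht₀
  by_contra! hneg
  have hsub : Icc (0:ℝ) 1 ×ˢ Icc 0 t₀ ⊆ Icc 0 1 ×ˢ Ico 0 T :=
    prod_mono le_rfl (fun t ht => ⟨ht.1, ht.2.trans_lt ht₀.2⟩)
  have hK : IsCompact (Icc (0:ℝ) 1 ×ˢ Icc (0:ℝ) t₀) := isCompact_Icc.prod isCompact_Icc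
  have hcont := hu_cont.mono hsub
  obtain ⟨M, hM⟩ := (hK.image_of_continuousOn (hcont.pow 2)).bddAbove
  have hM' : ∀ s ∈ Icc (0:ℝ) 1, ∀ t ∈ Icc (0:ℝ) t₀, u s t ^ 2 ≤ M := fun s hs t ht =>
    hM (mem_image_of_mem _ (mk_mem_prod hs ht))
  have hwc : ContinuousOn (fun q : ℝ × ℝ => Real.exp (-(M + 1) * q.2) * u q.1 q.2)
      (Icc (0:ℝ) 1 ×ˢ Icc (0:ℝ) t₀) :=
    (Continuous.continuousOn (by fun_prop)).mul hcont
  have hmem₀ : (s₀, t₀) ∈ Icc (0:ℝ) 1 ×ˢ Icc (0:ℝ) t₀ := ⟨hs₀, ht₀.1, le_rfl⟩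
  obtain ⟨⟨s₁, t₁⟩, ⟨hs₁, ht₁⟩, hmin⟩ := hK.exists_isMinOn ⟨_, hmem₀⟩ hwc
  simp only at hs₁ ht₁
  have hmin' : ∀ s ∈ Icc (0:ℝ) 1, ∀ t ∈ Icc (0:ℝ) t₀,
      Real.exp (-(M + 1) * t₁) * u s₁ t₁ ≤ Real.exp (-(M + 1) * t) * u s t :=
    fun s hs t ht => hmin (mk_mem_prod hs ht)
  have hu₁ : u s₁ t₁ < 0 := by
    have h1 := hmin' s₀ hs₀ t₀ ⟨ht₀.1, le_rfl⟩
    have h2 := mul_neg_of_pos_of_neg (Real.exp_pos (-(M + 1) * t₀)) hneg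
    exact neg_of_mul_neg_right (h1.trans_lt h2) (Real.exp_pos _).le
  have ht₁T : t₁ < T := ht₁.2.trans_lt ht₀.2
  have ht₁pos : 0 < t₁ := by
    rcases ht₁.1.eq_or_lt with h | h
    · subst h
      exact absurd (hinit s₁ hs₁) (not_le.2 hu₁)
    · exact h
  have hs₁i : s₁ ∈ Ioo (0:ℝ) 1 := by
    refine ⟨lt_of_le_of_ne hs₁.1 ?_, lt_of_le_of_ne hs₁.2 ?_⟩
    · rintro rfl
      exact hu₁.ne (hbd0 t₁ ⟨ht₁.1, ht₁T⟩)
    · rintro rfl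
      exact hu₁.ne (hbd1 t₁ ⟨ht₁.1, ht₁T⟩)
  have hdiff : DifferentiableAt ℝ (fun q : ℝ × ℝ => u q.1 q.2) (s₁, t₁) :=
    (hu_smooth.contDiffAt ((isOpen_Ioo.prod isOpen_Ioo).mem_nhds
      ⟨hs₁i, ht₁pos, ht₁T⟩)).differentiableAt (by norm_num)
  have hds : DifferentiableAt ℝ (fun y => u y t₁) s₁ :=
    DifferentiableAt.comp (f := fun y : ℝ => (y, t₁)) s₁ hdiff (by fun_prop)
  have hdt : DifferentiableAt ℝ (fun τ => u s₁ τ) t₁ :=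
    DifferentiableAt.comp (f := fun τ : ℝ => (s₁, τ)) t₁ hdiff (by fun_prop)
  have hloc : IsLocalMin (fun y => u y t₁) s₁ := by
    filter_upwards [Icc_mem_nhds hs₁i.1 hs₁i.2] with y hy
    exact le_of_mul_le_mul_left (hmin' y hy t₁ ht₁) (Real.exp_pos _)
  have huss := deriv_deriv_nonneg_of_isLocalMin hloc hds.continuousAt
  have hE : HasDerivAt (fun τ : ℝ => Real.exp (-(M + 1) * τ))
      (Real.exp (-(M + 1) * t₁) * (-(M + 1))) t₁ := by
    simpa using ((hasDerivAt_id t₁).const_mul (-(M + 1))).exp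
  have hwt := deriv_nonpos_of_left_min ht₁pos (hE.mul hdt.hasDerivAt)
    (fun t ht => hmin' s₁ hs₁ t ⟨ht.1.le, ht.2.le.trans ht₁.2⟩)
  have hut : deriv (fun τ => u s₁ τ) t₁ ≤ (M + 1) * u s₁ t₁ := by
    have h : Real.exp (-(M + 1) * t₁) *
        (deriv (fun τ => u s₁ τ) t₁ - (M + 1) * u s₁ t₁) ≤ 0 := by linarith
    linarith [nonpos_of_mul_nonpos_right h (Real.exp_pos _)]
  have heq := hpde s₁ hs₁i t₁ ⟨ht₁pos, ht₁T⟩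
  rw [hloc.deriv_eq_zero] at heq
  have hPu := mul_nonneg (hP_pos s₁ hs₁ t₁ ⟨ht₁.1, ht₁T⟩).le huss
  have hcube : u s₁ t₁ * u s₁ t₁ ^ 2 ≤ u s₁ t₁ * (M + 1) := by linarith
  have := (mul_le_mul_left_of_neg hu₁).1 hcube
  linarith [hM' s₁ hs₁ t₁ ht₁]
end
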